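/- There exist C ≥ 0 and Δt* > 0 such that for all 0 < Δt ≤ Δt*, all q ∈ ℝⁿ and all G ∈ ℝⁿ, |R_Δt(q, q − Δt∇V(q) + √(2Δt)G) − 1 + Δt^{3/2} ξ₊(q,G)| ≤ C Δt² (1 + |G|¹²). -/

import Mathlib

/-!
At `q' = q + v`, the logarithm of the Metropolis ratio is the error of the trapezoidal rule for
`∫ ⟪∇V, v⟫` along the segment from `q` to `q'`, minus `dt / 4` times the increment of `‖∇V‖²`.
By Taylor's formula its leading part is `D³V(q)(v, v, v) / 12 - dt / 2 * ⟪∇V(q), ∇²V(q) v⟫`, with an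
error of order `‖v‖⁴ + dt ‖v‖²`. The increment `v = -dt ∇V(q) + √(2dt) g` may be replaced by its
noise part `√(2dt) g` at the cost of another `O(dt²)`, and the leading part is then exactly
`-dt^{3/2} ξ(q, g)`.

Since `a ↦ min 1 (exp a)` is `1`-Lipschitz and `min 1 (exp (-b)) = 1 - max b 0 + O(b²)`, the
expansion of the logarithm passes to the acceptance probability. All constants are uniform in `q`
because the derivatives of `V` are bounded, which holds for periodic `V` by compactness of the
torus.
-/

open MeasureTheory RealInnerProductSpace

noncomputable section

abbrev En (n : ℕ) := EuclideanSpace ℝ (Fin n)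

/-- Gaussian proposal density of the Euler–Maruyama scheme. -/
def Tker {n : ℕ} (V : En n → ℝ) (dt : ℝ) (q q' : En n) : ℝ :=
  (4 * Real.pi * dt) ^ (-(n : ℝ) / 2) *
    Real.exp (-‖q' - q + dt • gradient V q‖ ^ 2 / (4 * dt))

/-- Metropolis acceptance probability. -/
def Rk {n : ℕ} (V : En n → ℝ) (dt : ℝ) (q q' : En n) : ℝ :=
  min 1 (Real.exp (-V q') * Tker V dt q' q / (Real.exp (-V q) * Tker V dt q q'))

/-- proposal move -/
def propMove {n : ℕ} (V : En n → ℝ) (dt : ℝ) (q g : En n) : En n :=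
  q - dt • gradient V q + Real.sqrt (2 * dt) • g

def xi {n : ℕ} (V : En n → ℝ) (q g : En n) : ℝ :=
  -(Real.sqrt 2 / 6) * iteratedFDeriv ℝ 3 V q (fun _ => g) +
    (Real.sqrt 2 / 2) * ⟪gradient V q, fderiv ℝ (gradient V) q g⟫

def xiPlus {n : ℕ} (V : En n → ℝ) (q g : En n) : ℝ := max (xi V q g) 0

/-- standard Gaussian measure on ℝⁿ -/
def gauss (n : ℕ) : Measure (En n) :=
  volume.withDensity fun g =>
    ENNReal.ofReal ((2 * Real.pi) ^ (-(n : ℝ) / 2) * Real.exp (-‖g‖ ^ 2 / 2))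

/-- fundamental domain of the torus -/
def Box (n : ℕ) (L : ℝ) : Set (En n) := {q | ∀ i, q i ∈ Set.Ico (0 : ℝ) L}

/-- integral with respect to the Gibbs measure μ on the torus M -/
def muInt {n : ℕ} (V : En n → ℝ) (L : ℝ) (f : En n → ℝ) : ℝ :=
  (∫ q in Box n L, Real.exp (-V q))⁻¹ * ∫ q in Box n L, f q * Real.exp (-V q)

/-- Laplacian -/
def lap {n : ℕ} (ψ : En n → ℝ) (q : En n) : ℝ :=
  ∑ i, iteratedFDeriv ℝ 2 ψ q (fun _ => EuclideanSpace.single i (1 : ℝ))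

/-- generator of the overdamped Langevin dynamics -/
def gen {n : ℕ} (V ψ : En n → ℝ) (q : En n) : ℝ :=
  -⟪gradient V q, gradient ψ q⟫ + lap ψ q

/-- MALA transition operator on periodic functions -/
def Pmala {n : ℕ} (V : En n → ℝ) (dt : ℝ) (f : En n → ℝ) (q : En n) : ℝ :=
  f q + ∫ q', Rk V dt q q' * Tker V dt q q' * (f q' - f q)

/-- the operator D₁ -/
def D1op {n : ℕ} (V ψ : En n → ℝ) (q : En n) : ℝ :=
  2 * ∑ i, ∑ j, (iteratedFDeriv ℝ 2 V q ![EuclideanSpace.single i (1:ℝ), EuclideanSpace.single j (1:ℝ)]) *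
      (iteratedFDeriv ℝ 2 ψ q ![EuclideanSpace.single i (1:ℝ), EuclideanSpace.single j (1:ℝ)])
    + ⟪gradient (fun x => lap V x) q, gradient ψ q⟫
    - ⟪gradient V q, fderiv ℝ (gradient V) q (gradient ψ q)⟫

/-- the operator D₂ -/
def D2op {n : ℕ} (V ψ : En n → ℝ) (q : En n) : ℝ :=
  -Real.sqrt 2 * ⟪∫ g, xiPlus V q g • g ∂(gauss n), gradient ψ q⟫

/-- the operator A appearing in the expansion of the MALA evolution operator -/
def Aop {n : ℕ} (V ψ : En n → ℝ) (q : En n) : ℝ :=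
  (gen V (gen V ψ) q + D1op V ψ q + D2op V ψ q) / 2

/-- Metropolized increment -/
def deltaInc {n : ℕ} (V : En n → ℝ) (dt : ℝ) (q g : En n) (u : ℝ) : En n :=
  if u ≤ Rk V dt q (propMove V dt q g) then (-dt) • gradient V q + Real.sqrt (2 * dt) • g
  else 0

/-- expectation over G (std Gaussian) and U (uniform on [0,1]) of the increment -/
def EguDelta {n : ℕ} (V : En n → ℝ) (dt : ℝ) (q : En n) : En n :=
  ∫ g, (∫ u in Set.Icc (0 : ℝ) 1, deltaInc V dt q g u) ∂(gauss n)

open Module Function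
open scoped Gradient

section Periodic

variable {ι E F : Type*}

theorem periodic_of_mem_span_int [AddCommGroup E] {f : E → F} {s : Set E}
    (hf : ∀ c ∈ s, Periodic f c) {c : E} (hc : c ∈ Submodule.span ℤ s) : Periodic f c := by
  induction hc using Submodule.span_induction with
  | mem c hc => exact hf c hc
  | zero => simp [Periodic]
  | add c d _ _ hc hd => exact hc.add_period hd
  | smul k c _ hc => exact hc.zsmul k

variable [NormedAddCommGroup E] [NormedSpace ℝ E] [NormedAddCommGroup F]

theorem exists_norm_le_of_continuous_of_periodic [Finite ι] (b : Basis ι ℝ E) {f : E → F}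
    (hf : Continuous f) (hper : ∀ i, Periodic f (b i)) : ∃ M, ∀ x, ‖f x‖ ≤ M := by
  cases nonempty_fintype ι
  have := b.finiteDimensional_of_finite
  have := FiniteDimensional.proper_real E
  have hfract (x : E) : f (ZSpan.fract b x) = f x :=
    (periodic_of_mem_span_int (Set.forall_mem_range.2 hper) (ZSpan.floor b x).2).sub_eq x
  obtain ⟨M, hM⟩ := (isCompact_closedBall (0 : E) (∑ i, ‖b i‖)).exists_bound_of_continuousOn
    hf.continuousOn
  exact ⟨M, fun x ↦ hfract x ▸ hM _ (mem_closedBall_zero_iff.2 (ZSpan.norm_fract_le b x))⟩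

variable [NormedSpace ℝ F]

theorem periodic_iteratedFDeriv {f : E → F} {c : E} (hf : Periodic f c) (k : ℕ) :
    Periodic (iteratedFDeriv ℝ k f) c := fun x ↦ by
  rw [← iteratedFDeriv_comp_add_right, hf.funext]

theorem exists_norm_iteratedFDeriv_le_of_periodic [Finite ι] (b : Basis ι ℝ E) {f : E → F}
    {N : ℕ} (hf : ContDiff ℝ N f) (hper : ∀ i, Periodic f (b i)) :
    ∃ M, ∀ k ≤ N, ∀ x, ‖iteratedFDeriv ℝ k f x‖ ≤ M := by
  obtain ⟨M, hM⟩ := exists_norm_le_of_continuous_of_periodic b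
    (f := fun x (k : Fin (N + 1)) ↦ ‖iteratedFDeriv ℝ k f x‖)
    (continuous_pi fun k ↦ (hf.continuous_iteratedFDeriv (by exact_mod_cast k.is_le)).norm)
    (fun i x ↦ by simp only [periodic_iteratedFDeriv (hper i) _ x])
  refine ⟨M, fun k hk x ↦ ?_⟩
  simpa using (norm_le_pi_norm _ (⟨k, Nat.lt_succ_of_le hk⟩ : Fin (N + 1))).trans (hM x)

end Periodic

section Taylor

variable {E F : Type*} [NormedAddCommGroup E] [NormedSpace ℝ E] [NormedAddCommGroup F]
  [NormedSpace ℝ F]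

theorem iteratedDeriv_comp_add_smul {f : E → F} {k : ℕ} (hf : ContDiff ℝ k f) (x v : E) (t : ℝ) :
    iteratedDeriv k (fun s : ℝ ↦ f (x + s • v)) t = iteratedFDeriv ℝ k f (x + t • v) fun _ ↦ v := by
  have hshift : ContDiff ℝ k fun y ↦ f (x + y) := hf.comp (contDiff_const.add contDiff_id)
  have h := (ContinuousLinearMap.toSpanSingleton ℝ v).iteratedFDeriv_comp_right hshift t le_rfl
  simp only [iteratedDeriv]
  simpa [comp_def, iteratedFDeriv_comp_add_left] using congrArg (fun A ↦ A fun _ ↦ (1 : ℝ)) h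

theorem norm_sub_taylor_le {f : E → F} {N : ℕ} {M : ℝ} (hf : ContDiff ℝ (N + 1) f)
    (hM : ∀ x, ‖iteratedFDeriv ℝ (N + 1) f x‖ ≤ M) (x v : E) :
    ‖f (x + v) - ∑ k ∈ Finset.range (N + 1), (k.factorial : ℝ)⁻¹ •
      iteratedFDeriv ℝ k f x fun _ ↦ v‖ ≤ M * ‖v‖ ^ (N + 1) / N.factorial := by
  let φ : ℝ → F := fun t ↦ f (x + t • v)
  have hφ : ContDiff ℝ (N + 1) φ :=
    hf.comp (contDiff_const.add (contDiff_id.smul contDiff_const))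
  have hderiv (k : ℕ) (hk : k ≤ N + 1) (t : ℝ) (ht : t ∈ Set.Icc (0 : ℝ) 1) :
      iteratedDerivWithin k φ (Set.Icc 0 1) t = iteratedFDeriv ℝ k f (x + t • v) fun _ ↦ v := by
    have hkN : (k : WithTop ℕ∞) ≤ N + 1 := by exact_mod_cast hk
    rw [iteratedDerivWithin_eq_iteratedDeriv (uniqueDiffOn_Icc zero_lt_one)
      (hφ.of_le hkN).contDiffAt ht, iteratedDeriv_comp_add_smul (hf.of_le hkN)]
  have htaylor := taylor_mean_remainder_bound (C := M * ‖v‖ ^ (N + 1)) zero_le_one hφ.contDiffOn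
    (Set.right_mem_Icc.2 zero_le_one) fun t ht ↦ by
      rw [hderiv (N + 1) le_rfl t ht]
      simpa using (iteratedFDeriv ℝ (N + 1) f (x + t • v)).le_of_opNorm_le (hM _) fun _ ↦ v
  rw [taylor_within_apply] at htaylor
  convert htaylor using 2
  · simp only [φ, one_smul]
    congr 1
    refine Finset.sum_congr rfl fun k hk ↦ ?_
    rw [hderiv k (Finset.mem_range.1 hk).le 0 (Set.left_mem_Icc.2 zero_le_one)]
    simp
  · simp

theorem abs_trapezoid_error_sub_le {f : E → ℝ} {M : ℝ} (hf : ContDiff ℝ 4 f)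
    (hM : ∀ x, ‖iteratedFDeriv ℝ 4 f x‖ ≤ M) (x v : E) :
    |(fderiv ℝ f x v + fderiv ℝ f (x + v) v) / 2 - (f (x + v) - f x)
      - iteratedFDeriv ℝ 3 f x (fun _ ↦ v) / 12| ≤ M * ‖v‖ ^ 4 / 2 := by
  have hsucc : iteratedFDeriv ℝ 2 (fderiv ℝ f) x (fun _ ↦ v) v =
      iteratedFDeriv ℝ 3 f x fun _ ↦ v :=
    (iteratedFDeriv_succ_apply_right (n := 2) (f := f) (x := x) fun _ ↦ v).symm
  have hvalue : |f (x + v) - (f x + fderiv ℝ f x v + 2⁻¹ * fderiv ℝ (fderiv ℝ f) x v v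
      + 6⁻¹ * iteratedFDeriv ℝ 3 f x fun _ ↦ v)| ≤ M * ‖v‖ ^ 4 / 6 := by
    simpa [Finset.sum_range_succ, Nat.factorial, iteratedFDeriv_two_apply] using
      norm_sub_taylor_le (N := 3) hf hM x v
  have hfderiv : ‖fderiv ℝ f (x + v) - ∑ k ∈ Finset.range 3, (k.factorial : ℝ)⁻¹ •
      iteratedFDeriv ℝ k (fderiv ℝ f) x fun _ ↦ v‖ ≤ M * ‖v‖ ^ 3 / 2 :=
    norm_sub_taylor_le (N := 2) (hf.fderiv_right (by norm_num))
      (fun y ↦ norm_iteratedFDeriv_fderiv.trans_le (hM y)) x v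
  have hslope : |fderiv ℝ f (x + v) v - (fderiv ℝ f x v + fderiv ℝ (fderiv ℝ f) x v v
      + 2⁻¹ * iteratedFDeriv ℝ 3 f x fun _ ↦ v)| ≤ M * ‖v‖ ^ 3 / 2 * ‖v‖ := by
    simpa [Finset.sum_range_succ, Nat.factorial, hsucc] using
      ContinuousLinearMap.le_of_opNorm_le _ hfderiv v
  rw [abs_le] at *
  constructor <;> linarith

theorem norm_map_const_sub_map_const_le {ι : Type*} [Fintype ι] [Nonempty ι]
    (A : ContinuousMultilinearMap ℝ (fun _ : ι ↦ E) F) (v w : E) :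
    ‖A (fun _ ↦ v) - A fun _ ↦ w‖ ≤
      ‖A‖ * Fintype.card ι * max ‖v‖ ‖w‖ ^ (Fintype.card ι - 1) * ‖v - w‖ := by
  have h := A.norm_image_sub_le (fun _ ↦ v) fun _ ↦ w
  rwa [pi_norm_const, pi_norm_const, show (fun _ : ι ↦ v) - (fun _ ↦ w) = fun _ ↦ v - w from rfl,
    pi_norm_const] at h

end Taylor

section Gradient

variable {E F : Type*} [NormedAddCommGroup E] [InnerProductSpace ℝ E] [NormedAddCommGroup F]
  [InnerProductSpace ℝ F]

theorem abs_sq_norm_sub_le {G : E → F} {M : ℝ} (hG : ContDiff ℝ 2 G)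
    (hM : ∀ k ≤ 2, ∀ x, ‖iteratedFDeriv ℝ k G x‖ ≤ M) (x v : E) :
    |‖G (x + v)‖ ^ 2 - ‖G x‖ ^ 2 - 2 * ⟪G x, fderiv ℝ G x v⟫| ≤ 3 * M ^ 2 * ‖v‖ ^ 2 := by
  have hGx : ‖G x‖ ≤ M := by simpa using hM 0 (by norm_num) x
  have hzero : ‖G (x + v) - G x‖ ≤ M * ‖v‖ := by
    simpa using norm_sub_taylor_le (N := 0) (hG.of_le (by norm_num)) (hM 1 (by norm_num)) x v
  have hfirst : ‖G (x + v) - G x - fderiv ℝ G x v‖ ≤ M * ‖v‖ ^ 2 := by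
    simpa [Finset.sum_range_succ, sub_sub] using
      norm_sub_taylor_le (N := 1) (hG.of_le (by norm_num)) (hM 2 le_rfl) x v
  have hexpand : ‖G (x + v)‖ ^ 2 - ‖G x‖ ^ 2 - 2 * ⟪G x, fderiv ℝ G x v⟫ =
      2 * ⟪G x, G (x + v) - G x - fderiv ℝ G x v⟫ + ‖G (x + v) - G x‖ ^ 2 := by
    rw [norm_sub_sq_real, inner_sub_right, inner_sub_right, real_inner_self_eq_norm_sq,
      real_inner_comm (G x)]
    ring
  calc |‖G (x + v)‖ ^ 2 - ‖G x‖ ^ 2 - 2 * ⟪G x, fderiv ℝ G x v⟫|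
      ≤ 2 * |⟪G x, G (x + v) - G x - fderiv ℝ G x v⟫| + ‖G (x + v) - G x‖ ^ 2 := by
        rw [hexpand]
        refine (abs_add_le _ _).trans_eq ?_
        rw [abs_mul, abs_two, abs_sq]
    _ ≤ 2 * (M * (M * ‖v‖ ^ 2)) + (M * ‖v‖) ^ 2 := by
        have hM₀ := (norm_nonneg _).trans hGx
        gcongr
        exact (abs_real_inner_le_norm _ _).trans (by gcongr)
    _ = 3 * M ^ 2 * ‖v‖ ^ 2 := by ring

variable [CompleteSpace E]

theorem contDiff_gradient {f : E → ℝ} {m n : WithTop ℕ∞} (hf : ContDiff ℝ n f) (hmn : m + 1 ≤ n) :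
    ContDiff ℝ m (∇ f) :=
  (InnerProductSpace.toDual ℝ E).symm.contDiff.comp (hf.fderiv_right hmn)

theorem norm_iteratedFDeriv_gradient (f : E → ℝ) (k : ℕ) (x : E) :
    ‖iteratedFDeriv ℝ k (∇ f) x‖ = ‖iteratedFDeriv ℝ (k + 1) f x‖ :=
  ((InnerProductSpace.toDual ℝ E).symm.norm_iteratedFDeriv_comp_left _ x k).trans
    norm_iteratedFDeriv_fderiv

theorem norm_gradient (f : E → ℝ) (x : E) : ‖∇ f x‖ = ‖iteratedFDeriv ℝ 1 f x‖ := by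
  simpa using norm_iteratedFDeriv_gradient f 0 x

theorem norm_fderiv_gradient (f : E → ℝ) (x : E) :
    ‖fderiv ℝ (∇ f) x‖ = ‖iteratedFDeriv ℝ 2 f x‖ := by
  simpa using norm_iteratedFDeriv_gradient f 1 x

end Gradient

section Exp

open Real

theorem abs_exp_sub_exp_le_of_nonpos {x y : ℝ} (hx : x ≤ 0) (hy : y ≤ 0) :
    |exp x - exp y| ≤ |x - y| := by
  simpa using (convex_Iic (0 : ℝ)).norm_image_sub_le_of_norm_deriv_le (f := exp) (C := 1)
    (fun _ _ ↦ differentiableAt_exp) (fun z hz ↦ by simpa using hz) hy hx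

theorem abs_exp_sub_one_sub_id_le_sq_of_nonpos {x : ℝ} (hx : x ≤ 0) :
    |exp x - 1 - x| ≤ x ^ 2 := by
  rcases le_total (-1) x with h | h
  · exact abs_exp_sub_one_sub_id_le (abs_le.2 ⟨h, hx.trans zero_le_one⟩)
  · rw [abs_of_nonneg (by linarith [add_one_le_exp x])]
    nlinarith [exp_le_one_iff.2 hx]

theorem abs_min_one_exp_sub_one_add_le (a b : ℝ) :
    |min 1 (exp a) - 1 + max b 0| ≤ |a + b| + b ^ 2 := by
  have hmin : min 1 (exp a) = exp (min a 0) := by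
    rw [exp_monotone.map_min, exp_zero, min_comm]
  have hmax : max b 0 = -min (-b) 0 := by rw [← neg_zero, min_neg_neg, neg_neg, neg_zero]
  rw [hmin, hmax, ← sub_eq_add_neg]
  calc |exp (min a 0) - 1 - min (-b) 0|
      ≤ |exp (min a 0) - exp (min (-b) 0)| + |exp (min (-b) 0) - 1 - min (-b) 0| := by
        refine (abs_add_le _ _).trans_eq' ?_
        ring_nf
    _ ≤ |min a 0 - min (-b) 0| + min (-b) 0 ^ 2 :=
        add_le_add (abs_exp_sub_exp_le_of_nonpos (min_le_right _ _) (min_le_right _ _))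
          (abs_exp_sub_one_sub_id_le_sq_of_nonpos (min_le_right _ _))
    _ ≤ |a + b| + b ^ 2 := by
        refine add_le_add ?_ ?_
        · simpa using abs_min_sub_min_le_max a 0 (-b) 0
        · rw [← neg_sq, ← hmax]
          exact sq_le_sq.2 (by simpa using abs_max_sub_max_le_abs b 0 0)

end Exp

section LogAcceptance

variable {E : Type*} [NormedAddCommGroup E] [InnerProductSpace ℝ E] [CompleteSpace E]
  {V : E → ℝ} {M : ℝ}

/-- The logarithm of the Metropolis ratio `e^{-V(q')} T(q', q) / (e^{-V(q)} T(q, q'))`, see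
`Rk_eq_min_one_exp_logAcceptance`. -/
def logAcceptance (V : E → ℝ) (dt : ℝ) (q q' : E) : ℝ :=
  ⟪∇ V q + ∇ V q', q' - q⟫ / 2 - (V q' - V q) - dt / 4 * (‖∇ V q'‖ ^ 2 - ‖∇ V q‖ ^ 2)

/-- The leading part of `logAcceptance V dt q (q + v)` for increments `v` of order `√dt`. -/
def logAcceptanceLeading (V : E → ℝ) (dt : ℝ) (q v : E) : ℝ :=
  iteratedFDeriv ℝ 3 V q (fun _ ↦ v) / 12 - dt / 2 * ⟪∇ V q, fderiv ℝ (∇ V) q v⟫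

theorem abs_logAcceptance_sub_leading_le (hV : ContDiff ℝ 4 V)
    (hM : ∀ k ∈ Finset.Icc 1 4, ∀ q, ‖iteratedFDeriv ℝ k V q‖ ≤ M) {dt : ℝ} (hdt : 0 ≤ dt)
    (q v : E) :
    |logAcceptance V dt q (q + v) - logAcceptanceLeading V dt q v| ≤
      M * ‖v‖ ^ 4 / 2 + 3 / 4 * M ^ 2 * dt * ‖v‖ ^ 2 := by
  have htrapezoid := abs_trapezoid_error_sub_le hV (hM 4 (by simp)) q v
  have hgradient := abs_sq_norm_sub_le (contDiff_gradient hV (by norm_num))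
    (fun k hk y ↦ (norm_iteratedFDeriv_gradient V k y).trans_le
      (hM (k + 1) (Finset.mem_Icc.2 ⟨by omega, by omega⟩) y)) q v
  rw [← inner_gradient_left, ← inner_gradient_left, ← inner_add_left] at htrapezoid
  calc |logAcceptance V dt q (q + v) - logAcceptanceLeading V dt q v|
      = |(⟪∇ V q + ∇ V (q + v), v⟫ / 2 - (V (q + v) - V q)
            - iteratedFDeriv ℝ 3 V q (fun _ ↦ v) / 12)
          - dt / 4 * (‖∇ V (q + v)‖ ^ 2 - ‖∇ V q‖ ^ 2
            - 2 * ⟪∇ V q, fderiv ℝ (∇ V) q v⟫)| := by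
        rw [logAcceptance, logAcceptanceLeading, add_sub_cancel_left]
        ring_nf
    _ ≤ M * ‖v‖ ^ 4 / 2 + dt / 4 * (3 * M ^ 2 * ‖v‖ ^ 2) := by
        refine (abs_sub _ _).trans (add_le_add htrapezoid ?_)
        rw [abs_mul, abs_of_nonneg (by positivity)]
        gcongr
    _ = M * ‖v‖ ^ 4 / 2 + 3 / 4 * M ^ 2 * dt * ‖v‖ ^ 2 := by ring

theorem abs_logAcceptanceLeading_sub_le {q : E}
    (hM : ∀ k ∈ Finset.Icc 1 3, ‖iteratedFDeriv ℝ k V q‖ ≤ M) {dt : ℝ} (hdt : 0 ≤ dt) (v w : E) :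
    |logAcceptanceLeading V dt q v - logAcceptanceLeading V dt q w| ≤
      (M / 4 * max ‖v‖ ‖w‖ ^ 2 + M ^ 2 / 2 * dt) * ‖v - w‖ := by
  have hM₀ : 0 ≤ M := (norm_nonneg _).trans (hM 1 (by simp))
  have hcubic : |iteratedFDeriv ℝ 3 V q (fun _ ↦ v) - iteratedFDeriv ℝ 3 V q fun _ ↦ w| ≤
      M * 3 * max ‖v‖ ‖w‖ ^ 2 * ‖v - w‖ := by
    refine (norm_map_const_sub_map_const_le (iteratedFDeriv ℝ 3 V q) v w).trans ?_
    simp only [Fintype.card_fin, Nat.cast_ofNat, Nat.reduceSub]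
    gcongr
    exact hM 3 (by simp)
  have hlinear : |⟪∇ V q, fderiv ℝ (∇ V) q (v - w)⟫| ≤ M * (M * ‖v - w‖) := by
    refine (abs_real_inner_le_norm _ _).trans ?_
    gcongr
    · exact (norm_gradient V q).trans_le (hM 1 (by simp))
    · exact ContinuousLinearMap.le_of_opNorm_le _
        ((norm_fderiv_gradient V q).trans_le (hM 2 (by simp))) _
  calc |logAcceptanceLeading V dt q v - logAcceptanceLeading V dt q w|
      = |(iteratedFDeriv ℝ 3 V q (fun _ ↦ v) - iteratedFDeriv ℝ 3 V q fun _ ↦ w) / 12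
          - dt / 2 * ⟪∇ V q, fderiv ℝ (∇ V) q (v - w)⟫| := by
        rw [logAcceptanceLeading, logAcceptanceLeading, map_sub, inner_sub_right]
        ring_nf
    _ ≤ M * 3 * max ‖v‖ ‖w‖ ^ 2 * ‖v - w‖ / 12 + dt / 2 * (M * (M * ‖v - w‖)) := by
        refine (abs_sub _ _).trans ?_
        rw [abs_div, abs_mul, abs_of_pos (by norm_num : (0 : ℝ) < 12),
          abs_of_nonneg (by positivity : 0 ≤ dt / 2)]
        gcongr
    _ = (M / 4 * max ‖v‖ ‖w‖ ^ 2 + M ^ 2 / 2 * dt) * ‖v - w‖ := by ring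

theorem abs_logAcceptance_drift_sub_leading_le (hV : ContDiff ℝ 4 V)
    (hM : ∀ k ∈ Finset.Icc 1 4, ∀ q, ‖iteratedFDeriv ℝ k V q‖ ≤ M) {dt ρ : ℝ} (hdt : 0 ≤ dt)
    (hρ : dt ≤ ρ ^ 2) {q w : E} (hw : ‖w‖ ≤ ρ) (hv : ‖w - dt • ∇ V q‖ ≤ ρ) :
    |logAcceptance V dt q (q + (w - dt • ∇ V q)) - logAcceptanceLeading V dt q w| ≤
      M * (1 + M) ^ 2 / 2 * ρ ^ 4 := by
  have hM₀ : 0 ≤ M := (norm_nonneg _).trans (hM 1 (by simp) q)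
  set v := w - dt • ∇ V q with hv_def
  have hdrift : ‖v - w‖ ≤ ρ ^ 2 * M := by
    rw [hv_def, sub_sub_cancel_left, norm_neg, norm_smul, Real.norm_of_nonneg hdt]
    gcongr
    exact (norm_gradient V q).trans_le (hM 1 (by simp) q)
  calc |logAcceptance V dt q (q + v) - logAcceptanceLeading V dt q w|
      ≤ |logAcceptance V dt q (q + v) - logAcceptanceLeading V dt q v|
          + |logAcceptanceLeading V dt q v - logAcceptanceLeading V dt q w| :=
        abs_sub_le _ _ _
    _ ≤ (M * ‖v‖ ^ 4 / 2 + 3 / 4 * M ^ 2 * dt * ‖v‖ ^ 2)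
          + (M / 4 * max ‖v‖ ‖w‖ ^ 2 + M ^ 2 / 2 * dt) * ‖v - w‖ :=
        add_le_add (abs_logAcceptance_sub_leading_le hV hM hdt q v)
          (abs_logAcceptanceLeading_sub_le
            (fun k hk ↦ hM k (Finset.Icc_subset_Icc_right (by norm_num) hk) q) hdt v w)
    _ ≤ (M * ρ ^ 4 / 2 + 3 / 4 * M ^ 2 * ρ ^ 2 * ρ ^ 2)
          + (M / 4 * ρ ^ 2 + M ^ 2 / 2 * ρ ^ 2) * (ρ ^ 2 * M) := by
        gcongr
        exact max_le hv hw
    _ = M * (1 + M) ^ 2 / 2 * ρ ^ 4 := by ring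

end LogAcceptance

section EulerMaruyama

variable {n : ℕ} {V : En n → ℝ} {M dt : ℝ}

theorem exists_norm_iteratedFDeriv_le_of_periodic_single {L : ℝ} (hL : L ≠ 0) {N : ℕ}
    (hV : ContDiff ℝ N V) (hper : ∀ i, Periodic V (L • EuclideanSpace.single i 1)) :
    ∃ M, ∀ k ≤ N, ∀ q, ‖iteratedFDeriv ℝ k V q‖ ≤ M :=
  exists_norm_iteratedFDeriv_le_of_periodic
    ((EuclideanSpace.basisFun (Fin n) ℝ).toBasis.isUnitSMul fun _ ↦ hL.isUnit) hV fun i ↦ by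
      simpa [Basis.isUnitSMul_apply] using hper i

theorem Rk_eq_min_one_exp_logAcceptance (V : En n → ℝ) (hdt : 0 < dt) (q q' : En n) :
    Rk V dt q q' = min 1 (Real.exp (logAcceptance V dt q q')) := by
  have hsq (x y : En n) : ‖y - x + dt • ∇ V x‖ ^ 2 =
      ‖y - x‖ ^ 2 + 2 * dt * ⟪∇ V x, y - x⟫ + dt ^ 2 * ‖∇ V x‖ ^ 2 := by
    rw [norm_add_sq_real, inner_smul_right, norm_smul, mul_pow, real_inner_comm,
      Real.norm_eq_abs, sq_abs]
    ring
  have hnormalization : (4 * Real.pi * dt) ^ (-(n : ℝ) / 2) ≠ 0 := by positivity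
  rw [Rk, Tker, Tker, mul_left_comm (Real.exp (-V q')), mul_left_comm (Real.exp (-V q)),
    mul_div_mul_left _ _ hnormalization, ← Real.exp_add, ← Real.exp_add, ← Real.exp_sub, hsq, hsq,
    logAcceptance, inner_add_left, norm_sub_rev q q', ← neg_sub q' q, inner_neg_right]
  congr 2
  field_simp
  ring

theorem propMove_eq_add (V : En n → ℝ) (dt : ℝ) (q g : En n) :
    propMove V dt q g = q + (√(2 * dt) • g - dt • ∇ V q) := by
  rw [propMove]
  abel

theorem rpow_three_halves_mul_sqrt_two (hdt : 0 ≤ dt) :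
    dt ^ (3 / 2 : ℝ) * √2 = dt * √(2 * dt) := by
  rw [show (3 / 2 : ℝ) = 1 + 1 / 2 by norm_num,
    Real.rpow_add_of_nonneg hdt zero_le_one one_half_pos.le, Real.rpow_one, ← Real.sqrt_eq_rpow,
    Real.sqrt_mul zero_le_two]
  ring

theorem logAcceptanceLeading_sqrt_smul (V : En n → ℝ) (hdt : 0 ≤ dt) (q g : En n) :
    logAcceptanceLeading V dt q (√(2 * dt) • g) = -(dt ^ (3 / 2 : ℝ) * xi V q g) := by
  have hcubic : iteratedFDeriv ℝ 3 V q (fun _ ↦ √(2 * dt) • g) =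
      √(2 * dt) ^ 3 * iteratedFDeriv ℝ 3 V q fun _ ↦ g := by
    simpa using (iteratedFDeriv ℝ 3 V q).map_smul_univ (fun _ ↦ √(2 * dt)) fun _ ↦ g
  have hsq : √(2 * dt) ^ 2 = 2 * dt := Real.sq_sqrt (by positivity)
  rw [logAcceptanceLeading, hcubic, map_smul, inner_smul_right, xi]
  linear_combination (√(2 * dt) / 12 * iteratedFDeriv ℝ 3 V q fun _ ↦ g) * hsq
    + (⟪∇ V q, fderiv ℝ (∇ V) q g⟫ / 2 - iteratedFDeriv ℝ 3 V q (fun _ ↦ g) / 6)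
      * rpow_three_halves_mul_sqrt_two hdt

theorem abs_logAcceptance_propMove_add_le (hV : ContDiff ℝ 4 V)
    (hM : ∀ k ∈ Finset.Icc 1 4, ∀ q, ‖iteratedFDeriv ℝ k V q‖ ≤ M) (hdt : 0 ≤ dt) (hdt₁ : dt ≤ 1)
    (q g : En n) :
    |logAcceptance V dt q (propMove V dt q g) + dt ^ (3 / 2 : ℝ) * xi V q g| ≤
      2 * M * (1 + M) ^ 6 * dt ^ 2 * (1 + ‖g‖) ^ 4 := by
  have hM₀ : 0 ≤ M := (norm_nonneg _).trans (hM 1 (by simp) q)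
  have hσ : √(2 * dt) ^ 2 = 2 * dt := Real.sq_sqrt (by positivity)
  have hdtσ : dt ≤ √(2 * dt) := Real.le_sqrt_of_sq_le (by nlinarith)
  set ρ := √(2 * dt) * ((1 + M) * (1 + ‖g‖)) with hρ_def
  have hnoise : ‖√(2 * dt) • g‖ = √(2 * dt) * ‖g‖ := by
    rw [norm_smul, Real.norm_of_nonneg (Real.sqrt_nonneg _)]
  have hdrift : ‖dt • ∇ V q‖ ≤ √(2 * dt) * M := by
    rw [norm_smul, Real.norm_of_nonneg hdt]
    gcongr
    exact (norm_gradient V q).trans_le (hM 1 (by simp) q)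
  have hsum : √(2 * dt) * ‖g‖ + √(2 * dt) * M ≤ ρ := by
    rw [← mul_add, hρ_def]
    gcongr
    nlinarith [norm_nonneg g]
  have hρ : dt ≤ ρ ^ 2 := by
    rw [hρ_def, mul_pow, hσ]
    nlinarith [one_le_pow₀ (n := 2) (one_le_mul_of_one_le_of_one_le
      (le_add_of_nonneg_right hM₀) (le_add_of_nonneg_right (norm_nonneg g)))]
  have h := abs_logAcceptance_drift_sub_leading_le hV hM hdt hρ
    (hnoise.trans_le ((le_add_of_nonneg_right (by positivity)).trans hsum))
    ((norm_sub_le _ _).trans ((add_le_add hnoise.le hdrift).trans hsum))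
  rw [← propMove_eq_add, logAcceptanceLeading_sqrt_smul V hdt, sub_neg_eq_add] at h
  refine h.trans_eq ?_
  rw [hρ_def]
  linear_combination M * (1 + M) ^ 6 / 2 * (1 + ‖g‖) ^ 4 * (√(2 * dt) ^ 2 + 2 * dt) * hσ

theorem abs_xi_le {q : En n} (hM : ∀ k ∈ Finset.Icc 1 3, ‖iteratedFDeriv ℝ k V q‖ ≤ M)
    (g : En n) : |xi V q g| ≤ (M + M ^ 2) * (1 + ‖g‖) ^ 3 := by
  have hM₀ : 0 ≤ M := (norm_nonneg _).trans (hM 1 (by simp))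
  have hsqrt : √2 ≤ 2 := Real.sqrt_le_iff.2 (by norm_num)
  have hs : 1 ≤ 1 + ‖g‖ := le_add_of_nonneg_right (norm_nonneg g)
  have hg : ‖g‖ ≤ 1 + ‖g‖ := le_add_of_nonneg_left zero_le_one
  have hcubic : |iteratedFDeriv ℝ 3 V q fun _ ↦ g| ≤ M * (1 + ‖g‖) ^ 3 := by
    refine ((iteratedFDeriv ℝ 3 V q).le_of_opNorm_le (hM 3 (by simp)) _).trans ?_
    rw [Fin.prod_const]
    gcongr
  have hlinear : |⟪∇ V q, fderiv ℝ (∇ V) q g⟫| ≤ M * (M * (1 + ‖g‖) ^ 3) := by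
    refine (abs_real_inner_le_norm _ _).trans ?_
    gcongr
    · exact (norm_gradient V q).trans_le (hM 1 (by simp))
    · refine (ContinuousLinearMap.le_of_opNorm_le _
        ((norm_fderiv_gradient V q).trans_le (hM 2 (by simp))) g).trans ?_
      gcongr
      exact hg.trans (le_self_pow₀ hs three_ne_zero)
  calc |xi V q g|
      ≤ √2 / 6 * |iteratedFDeriv ℝ 3 V q fun _ ↦ g|
          + √2 / 2 * |⟪∇ V q, fderiv ℝ (∇ V) q g⟫| := by
        rw [xi]
        refine (abs_add_le _ _).trans_eq ?_
        rw [abs_mul, abs_mul, abs_neg, abs_of_nonneg (by positivity : 0 ≤ √2 / 6),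
          abs_of_nonneg (by positivity : 0 ≤ √2 / 2)]
    _ ≤ 1 * (M * (1 + ‖g‖) ^ 3) + 1 * (M * (M * (1 + ‖g‖) ^ 3)) := by
        gcongr <;> linarith
    _ = (M + M ^ 2) * (1 + ‖g‖) ^ 3 := by ring

theorem sq_rpow_three_halves_mul_xi_le {q : En n}
    (hM : ∀ k ∈ Finset.Icc 1 3, ‖iteratedFDeriv ℝ k V q‖ ≤ M) (hdt : 0 ≤ dt) (hdt₁ : dt ≤ 1)
    (g : En n) :
    (dt ^ (3 / 2 : ℝ) * xi V q g) ^ 2 ≤ (M + M ^ 2) ^ 2 * dt ^ 2 * (1 + ‖g‖) ^ 6 := by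
  have hdt_pow : (dt ^ (3 / 2 : ℝ)) ^ 2 = dt ^ 3 := by
    rw [← Real.rpow_natCast, ← Real.rpow_mul hdt, ← Real.rpow_natCast dt 3]
    norm_num
  calc (dt ^ (3 / 2 : ℝ) * xi V q g) ^ 2 = dt ^ 3 * |xi V q g| ^ 2 := by
        rw [mul_pow, hdt_pow, sq_abs]
    _ ≤ dt ^ 2 * ((M + M ^ 2) * (1 + ‖g‖) ^ 3) ^ 2 := by
        gcongr ?_ * ?_ ^ 2
        · exact pow_le_pow_of_le_one hdt hdt₁ (by norm_num)
        · exact abs_xi_le hM g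
    _ = (M + M ^ 2) ^ 2 * dt ^ 2 * (1 + ‖g‖) ^ 6 := by ring

end EulerMaruyama

theorem stmt1_general {n : ℕ} {V : En n → ℝ} (hV : ContDiff ℝ 4 V) {M : ℝ}
    (hM : ∀ k ∈ Finset.Icc 1 4, ∀ q, ‖iteratedFDeriv ℝ k V q‖ ≤ M) {p : ℕ} (hp : 6 ≤ p) :
    ∃ C ≥ (0 : ℝ), ∀ dt : ℝ, 0 < dt → dt ≤ 1 → ∀ q g : En n,
      |Rk V dt q (propMove V dt q g) - 1 + dt ^ ((3 : ℝ) / 2) * xiPlus V q g| ≤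
        C * dt ^ 2 * (1 + ‖g‖ ^ p) := by
  have hM₀ : 0 ≤ M := (norm_nonneg _).trans (hM 1 (by simp) 0)
  set A := 2 * M * (1 + M) ^ 6
  set B := (M + M ^ 2) ^ 2
  refine ⟨(A + B) * 2 ^ (p - 1), by positivity, fun dt hdt hdt₁ q g ↦ ?_⟩
  have hg : 1 ≤ 1 + ‖g‖ := le_add_of_nonneg_right (norm_nonneg g)
  rw [Rk_eq_min_one_exp_logAcceptance V hdt, xiPlus, mul_max_of_nonneg _ _ (by positivity),
    mul_zero]
  calc _ ≤ _ := abs_min_one_exp_sub_one_add_le _ _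
    _ ≤ A * dt ^ 2 * (1 + ‖g‖) ^ 4 + B * dt ^ 2 * (1 + ‖g‖) ^ 6 :=
        add_le_add (abs_logAcceptance_propMove_add_le hV hM hdt.le hdt₁ q g)
          (sq_rpow_three_halves_mul_xi_le
            (fun k hk ↦ hM k (Finset.Icc_subset_Icc_right (by norm_num) hk) q) hdt.le hdt₁ g)
    _ ≤ A * dt ^ 2 * (1 + ‖g‖) ^ p + B * dt ^ 2 * (1 + ‖g‖) ^ p := by
        gcongr
        omega
    _ = (A + B) * dt ^ 2 * (1 + ‖g‖) ^ p := by ring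
    _ ≤ (A + B) * dt ^ 2 * (2 ^ (p - 1) * (1 + ‖g‖ ^ p)) := by
        gcongr
        simpa using add_pow_le zero_le_one (norm_nonneg g) p
    _ = (A + B) * 2 ^ (p - 1) * dt ^ 2 * (1 + ‖g‖ ^ p) := by ring

theorem stmt1 (n : ℕ) (hn : 1 ≤ n) (L : ℝ) (hL : 0 < L)
    (V : En n → ℝ) (hV : ContDiff ℝ (⊤ : ℕ∞) V)
    (hper : ∀ (q : En n) (i : Fin n), V (q + L • EuclideanSpace.single i (1 : ℝ)) = V q) :
    ∃ C ≥ (0 : ℝ), ∃ dts > (0 : ℝ), ∀ dt : ℝ, 0 < dt → dt ≤ dts → ∀ q g : En n,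
      |Rk V dt q (propMove V dt q g) - 1 + dt ^ ((3 : ℝ) / 2) * xiPlus V q g| ≤
        C * dt ^ 2 * (1 + ‖g‖ ^ 12) := by
  have hV₄ : ContDiff ℝ 4 V := contDiff_infty.1 hV 4
  obtain ⟨M, hM⟩ := exists_norm_iteratedFDeriv_le_of_periodic_single hL.ne' hV₄
    fun i q ↦ hper q i
  obtain ⟨C, hC, hR⟩ := stmt1_general hV₄ (fun k hk ↦ hM k (Finset.mem_Icc.1 hk).2)
    (p := 12) (by norm_num)
  exact ⟨C, hC, 1, one_pos, hR⟩
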